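/- Suppose there exist a probability measure μ on S and a constant C > 0 such that P(s,a,s') ≤ C·μ(s') for all s,s' ∈ S and a ∈ A. Then C ≥ 1, and for every randomized policy π and every state s, the state occupancy frequency satisfies d_π(s) ≤ γ·C·μ(s) + (1−γ)·α(s) ≤ C·σ(s), where σ = γ·μ + (1−γ)·α. -/

import Mathlib

open Matrix BigOperators

namespace DRADP

variable {S A K : Type*} [Fintype S] [Fintype A] [Fintype K] [DecidableEq S] [DecidableEq A]

/-- A randomized policy: nonnegative with rows summing to one. -/
def isPolicy (π : S → A → ℝ) : Prop :=
  (∀ s a, 0 ≤ π s a) ∧ ∀ s, ∑ a, π s a = 1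

/-- The randomized policy corresponding to a deterministic policy `p : S → A`. -/
def detPol (p : S → A) : S → A → ℝ := fun s a => if a = p s then 1 else 0

/-- Transition matrix `P_π` of a policy. -/
noncomputable def Pmat (P : S → A → S → ℝ) (π : S → A → ℝ) : Matrix S S ℝ :=
  Matrix.of fun s s' => ∑ a, P s a s' * π s a

/-- Reward vector `r_π` of a policy. -/
noncomputable def rvec (r : S → A → ℝ) (π : S → A → ℝ) : S → ℝ :=
  fun s => ∑ a, r s a * π s a

/-- State occupancy frequency `d_π = (1-γ)·∑_t γ^t (P_πᵀ)^t α`. -/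
noncomputable def dOcc (P : S → A → S → ℝ) (α : S → ℝ) (γ : ℝ) (π : S → A → ℝ) : S → ℝ :=
  fun s => (1 - γ) * ∑' t : ℕ, γ ^ t * (((Pmat P π)ᵀ ^ t) *ᵥ α) s

/-- State-action occupancy frequency `u_π(s,a) = d_π(s)·π(s,a)`. -/
noncomputable def uOcc (P : S → A → S → ℝ) (α : S → ℝ) (γ : ℝ) (π : S → A → ℝ) : S × A → ℝ :=
  fun w => dOcc P α γ π w.1 * π w.1 w.2

/-- Value function `v_π = ∑_t γ^t P_π^t r_π`. -/
noncomputable def vVal (P : S → A → S → ℝ) (r : S → A → ℝ) (γ : ℝ) (π : S → A → ℝ) : S → ℝ :=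
  fun s => ∑' t : ℕ, γ ^ t * ((Pmat P π ^ t) *ᵥ rvec r π) s

/-- The return `ρ(π) = αᵀ v_π`. -/
noncomputable def ret (P : S → A → S → ℝ) (r : S → A → ℝ) (α : S → ℝ) (γ : ℝ)
    (π : S → A → ℝ) : ℝ :=
  ∑ s, α s * vVal P r γ π s

/-- The matrix `A` with rows `A((s,a),·) = e_sᵀ − γ·P(s,a,·)`. -/
def Amat (P : S → A → S → ℝ) (γ : ℝ) : Matrix (S × A) S ℝ :=
  Matrix.of fun w s' => (if w.1 = s' then (1 : ℝ) else 0) - γ * P w.1 w.2 s'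

/-- The vector `b(s,a) = r(s,a)`. -/
def bvec (r : S → A → ℝ) : S × A → ℝ := fun w => r w.1 w.2

/-- `U = {u : u ≥ 0, Aᵀu = (1−γ)·α}`. -/
def Uset (P : S → A → S → ℝ) (α : S → ℝ) (γ : ℝ) : Set (S × A → ℝ) :=
  {u | (∀ w, 0 ≤ u w) ∧ (Amat P γ)ᵀ *ᵥ u = fun s => (1 - γ) * α s}

/-- The Bellman operator `L`. -/
noncomputable def bell (P : S → A → S → ℝ) (r : S → A → ℝ) (γ : ℝ) (v : S → ℝ) : S → ℝ :=
  fun s => ⨆ a : A, (r s a + γ * ∑ s', P s a s' * v s')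

/-- A deterministic policy `p` is greedy w.r.t. `v`. -/
def isGreedy (P : S → A → S → ℝ) (r : S → A → ℝ) (γ : ℝ) (p : S → A) (v : S → ℝ) : Prop :=
  ∀ s a, r s a + γ * ∑ s', P s a s' * v s' ≤ r s (p s) + γ * ∑ s', P s (p s) s' * v s'

/-- Approximate occupancy frequencies `Ũ(π)`. -/
def Utilde (P : S → A → S → ℝ) (α : S → ℝ) (γ : ℝ) (Φ : Matrix S K ℝ) (π : S → A → ℝ) :
    Set (S × A → ℝ) :=
  {u | (∀ w, 0 ≤ u w) ∧
    (Φᵀ *ᵥ ((Amat P γ)ᵀ *ᵥ u) = fun j => (1 - γ) * (Φᵀ *ᵥ α) j) ∧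
    ∀ w, u w ≤ π w.1 w.2}

/-- The distributionally robust return estimate
`ρ̃(π) = sup_{v∈Ṽ} (αᵀv − sup_{u∈Ũ(π)} uᵀ(Av − b)/(1−γ))`. -/
noncomputable def rhoTilde (P : S → A → S → ℝ) (r : S → A → ℝ) (α : S → ℝ) (γ : ℝ)
    (Φ : Matrix S K ℝ) (π : S → A → ℝ) : ℝ :=
  ⨆ x : K → ℝ, (∑ s, α s * (Φ *ᵥ x) s -
    sSup ((fun u : S × A → ℝ =>
      (∑ w, u w * ((Amat P γ *ᵥ (Φ *ᵥ x)) w - bvec r w)) / (1 - γ)) ''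
      Utilde P α γ Φ π))

/-- The set `G` of deterministic policies greedy w.r.t. some representable value function. -/
def greedySet (P : S → A → S → ℝ) (r : S → A → ℝ) (γ : ℝ) (Φ : Matrix S K ℝ) :
    Set (S → A → ℝ) :=
  {π | ∃ p : S → A, π = detPol p ∧ ∃ x : K → ℝ, isGreedy P r γ p (Φ *ᵥ x)}

end DRADP

open DRADP

/-!
The occupancy frequency `d` satisfies the flow balance equation `d = (1 - γ) α + γ d P_π`, which is
the geometric series of `γ P_π` multiplied by `1 - γ P_π`. Each entry of column `s` of `P_π` is an
average of transition probabilities, hence at most `C μ(s)`. Since `d` is nonnegative of total mass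
one, `d P_π` is again an average of rows of `P_π`, so it is also at most `C μ`.
-/

section FiniteSums

variable {ι R : Type*} [Fintype ι] [Semiring R] [PartialOrder R] [IsOrderedRing R]

theorem dotProduct_le_mul_sum {f w : ι → R} {c : R} (hf : ∀ i, f i ≤ c) (hw : ∀ i, 0 ≤ w i) :
    f ⬝ᵥ w ≤ c * ∑ i, w i := by
  rw [Finset.mul_sum]
  exact Finset.sum_le_sum fun i _ => mul_le_mul_of_nonneg_right (hf i) (hw i)

theorem one_le_of_le_mul_of_sum_eq_one {p μ : ι → R} {C : R} (hp : ∑ i, p i = 1)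
    (hμ : ∑ i, μ i = 1) (h : ∀ i, p i ≤ C * μ i) : 1 ≤ C :=
  calc
    1 = ∑ i, p i := hp.symm
    _ ≤ ∑ i, C * μ i := Finset.sum_le_sum fun i _ => h i
    _ = C := by rw [← Finset.mul_sum, hμ, mul_one]

theorem sum_vecMul_of_mem_rowStochastic [DecidableEq ι] {M : Matrix ι ι R}
    (hM : M ∈ rowStochastic R ι) (x : ι → R) : ∑ i, (x ᵥ* M) i = ∑ i, x i := by
  rw [← dotProduct_one, ← dotProduct_mulVec, one_vecMul_of_mem_rowStochastic hM, dotProduct_one]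

end FiniteSums

section DiscountedOccupancy

variable {S : Type*} [Fintype S] [DecidableEq S] {M : Matrix S S ℝ} {α : S → ℝ} {γ : ℝ}

/-- The discounted occupancy frequency `(1 - γ) ∑ₜ γᵗ α Mᵗ` of the Markov chain with transition
matrix `M` and initial row vector `α`. The occupancy frequency `d_π` is the case `M = P_π`. -/
noncomputable def discountedOccupancy (M : Matrix S S ℝ) (α : S → ℝ) (γ : ℝ) : S → ℝ :=
  fun s => (1 - γ) * ∑' t : ℕ, γ ^ t * (α ᵥ* M ^ t) s

theorem discountedOccupancy_eq_smul_vecMul_tsum (h : Summable fun t : ℕ => (γ • M) ^ t) :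
    discountedOccupancy M α γ = (1 - γ) • (α ᵥ* ∑' t : ℕ, (γ • M) ^ t) := by
  have h_vecMul : HasSum (fun t : ℕ => α ᵥ* (γ • M) ^ t) (α ᵥ* ∑' t : ℕ, (γ • M) ^ t) :=
    h.hasSum.map (Matrix.vecMulBilin ℝ ℝ α) (continuous_const.matrix_vecMul continuous_id)
  ext s
  rw [Pi.smul_apply, smul_eq_mul, discountedOccupancy, ← (Pi.hasSum.1 h_vecMul s).tsum_eq]
  simp only [smul_pow, vecMul_smul, Pi.smul_apply, smul_eq_mul]

theorem discountedOccupancy_flow_balance (h : Summable fun t : ℕ => (γ • M) ^ t) :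
    discountedOccupancy M α γ = (1 - γ) • α + γ • (discountedOccupancy M α γ ᵥ* M) := by
  rw [← sub_eq_iff_eq_add]
  calc
    discountedOccupancy M α γ - γ • (discountedOccupancy M α γ ᵥ* M)
      = discountedOccupancy M α γ ᵥ* (1 - γ • M) := by
        rw [vecMul_sub, vecMul_one, vecMul_smul]
    _ = (1 - γ) • (α ᵥ* ((∑' t : ℕ, (γ • M) ^ t) * (1 - γ • M))) := by
        rw [discountedOccupancy_eq_smul_vecMul_tsum h, smul_vecMul, vecMul_vecMul]
    _ = (1 - γ) • α := by
        rw [h.tsum_pow_mul_one_sub, vecMul_one]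

theorem summable_smul_pow_of_mem_rowStochastic (hM : M ∈ rowStochastic ℝ S) (hγ : |γ| < 1) :
    Summable fun t : ℕ => (γ • M) ^ t := by
  refine Pi.summable.2 fun i => Pi.summable.2 fun j => ?_
  refine (summable_geometric_of_lt_one (abs_nonneg γ) hγ).of_norm_bounded fun t => ?_
  have hMt : M ^ t ∈ rowStochastic ℝ S := pow_mem hM t
  rw [smul_pow, Matrix.smul_apply, smul_eq_mul, norm_mul, norm_pow, Real.norm_eq_abs,
    Real.norm_of_nonneg (nonneg_of_mem_rowStochastic hMt)]
  exact mul_le_of_le_one_right (by positivity) (le_one_of_mem_rowStochastic hMt)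

theorem discountedOccupancy_nonneg (hM : ∀ i j, 0 ≤ M i j) (hα : ∀ s, 0 ≤ α s) (hγ0 : 0 ≤ γ)
    (hγ1 : γ ≤ 1) (s : S) : 0 ≤ discountedOccupancy M α γ s :=
  mul_nonneg (sub_nonneg.2 hγ1) <| tsum_nonneg fun t => mul_nonneg (pow_nonneg hγ0 t) <|
    Finset.sum_nonneg fun i _ => mul_nonneg (hα i) (Matrix.pow_apply_nonneg hM t i s)

theorem sum_discountedOccupancy (hM : M ∈ rowStochastic ℝ S) (hγ : |γ| < 1) :
    ∑ s, discountedOccupancy M α γ s = ∑ s, α s := by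
  set d := discountedOccupancy M α γ with hd
  have h_mass : ∑ s, d s = (1 - γ) * ∑ s, α s + γ * ∑ s, d s := by
    conv_lhs =>
      rw [hd, discountedOccupancy_flow_balance (summable_smul_pow_of_mem_rowStochastic hM hγ), ← hd]
    simp only [Pi.add_apply, Pi.smul_apply, smul_eq_mul, Finset.sum_add_distrib, ← Finset.mul_sum,
      sum_vecMul_of_mem_rowStochastic hM]
  have h_one_sub : 1 - γ ≠ 0 := (sub_pos.2 (lt_of_abs_lt hγ)).ne'
  exact mul_left_cancel₀ h_one_sub (by linear_combination h_mass)

theorem discountedOccupancy_le (hM : M ∈ rowStochastic ℝ S) (hα : ∀ s, 0 ≤ α s) (hγ0 : 0 ≤ γ)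
    (hγ1 : γ < 1) {s : S} {c : ℝ} (hc : ∀ i, M i s ≤ c) :
    discountedOccupancy M α γ s ≤ γ * (c * ∑ i, α i) + (1 - γ) * α s := by
  have hγ : |γ| < 1 := by rwa [abs_of_nonneg hγ0]
  set d := discountedOccupancy M α γ with hd
  have h_balance : d s = (1 - γ) * α s + γ * (d ᵥ* M) s :=
    congrFun (discountedOccupancy_flow_balance (summable_smul_pow_of_mem_rowStochastic hM hγ)) s
  have h_inflow : (d ᵥ* M) s ≤ c * ∑ i, α i :=
    calc
      (d ᵥ* M) s = M.col s ⬝ᵥ d := dotProduct_comm _ _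
      _ ≤ c * ∑ i, d i :=
        dotProduct_le_mul_sum hc (discountedOccupancy_nonneg hM.1 hα hγ0 hγ1.le)
      _ = c * ∑ i, α i := by rw [hd, sum_discountedOccupancy hM hγ]
  rw [h_balance, add_comm]
  gcongr

end DiscountedOccupancy

section Policy

variable {S A : Type*} [Fintype A] {P : S → A → S → ℝ} {π : S → A → ℝ}

theorem dOcc_eq_discountedOccupancy [Fintype S] [DecidableEq S] (P : S → A → S → ℝ) (α : S → ℝ)
    (γ : ℝ) (π : S → A → ℝ) : dOcc P α γ π = discountedOccupancy (Pmat P π) α γ := by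
  funext s
  simp only [dOcc, discountedOccupancy, ← transpose_pow, mulVec_transpose]

theorem Pmat_mem_rowStochastic [Fintype S] [DecidableEq S] (hP : ∀ s a s', 0 ≤ P s a s')
    (hPsum : ∀ s a, ∑ s', P s a s' = 1) (hπ : isPolicy π) : Pmat P π ∈ rowStochastic ℝ S := by
  refine mem_rowStochastic_iff_sum.2 ⟨fun s s' => ?_, fun s => ?_⟩
  · exact Finset.sum_nonneg fun a _ => mul_nonneg (hP s a s') (hπ.1 s a)
  · calc
      ∑ s', Pmat P π s s' = ∑ a, ∑ s', P s a s' * π s a := Finset.sum_comm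
      _ = ∑ a, π s a := by simp only [← Finset.sum_mul, hPsum, one_mul]
      _ = 1 := hπ.2 s

theorem Pmat_apply_le (hπ : isPolicy π) {s s' : S} {c : ℝ} (hc : ∀ a, P s a s' ≤ c) :
    Pmat P π s s' ≤ c :=
  calc
    Pmat P π s s' ≤ c * ∑ a, π s a := dotProduct_le_mul_sum hc (hπ.1 s)
    _ = c := by rw [hπ.2 s, mul_one]

end Policy

/-- under the concentration-coefficient assumption `P(s,a,s') ≤ C·μ(s')`,
one has `C ≥ 1` and `d_π ≤ γ·C·μ + (1−γ)·α ≤ C·σ` with `σ = γ·μ + (1−γ)·α`. -/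
theorem occupancy_concentration_bound {S A : Type*} [Fintype S] [Fintype A]
    [Nonempty S] [Nonempty A] [DecidableEq S]
    (P : S → A → S → ℝ) (α : S → ℝ) (γ : ℝ)
    (hP : ∀ s a s', 0 ≤ P s a s') (hPsum : ∀ s a, ∑ s', P s a s' = 1)
    (hα : ∀ s, 0 ≤ α s) (hαsum : ∑ s, α s = 1)
    (hγ0 : 0 ≤ γ) (hγ1 : γ < 1)
    (μ : S → ℝ) (hμ0 : ∀ s, 0 ≤ μ s) (hμ1 : ∑ s, μ s = 1)
    (C : ℝ) (hC : 0 < C)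
    (hconc : ∀ s a s', P s a s' ≤ C * μ s') :
    1 ≤ C ∧
    ∀ π : S → A → ℝ, isPolicy π → ∀ s,
      dOcc P α γ π s ≤ γ * C * μ s + (1 - γ) * α s ∧
      γ * C * μ s + (1 - γ) * α s ≤ C * (γ * μ s + (1 - γ) * α s) := by
  have hC1 : 1 ≤ C := by
    obtain ⟨s₀, a₀⟩ : Nonempty (S × A) := inferInstance
    exact one_le_of_le_mul_of_sum_eq_one (hPsum s₀ a₀) hμ1 (hconc s₀ a₀)
  refine ⟨hC1, fun π hπ s => ⟨?_, ?_⟩⟩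
  · have h_bound := discountedOccupancy_le (Pmat_mem_rowStochastic hP hPsum hπ) hα hγ0 hγ1
      fun i => Pmat_apply_le hπ fun a => hconc i a s
    rwa [hαsum, mul_one, ← mul_assoc, ← dOcc_eq_discountedOccupancy] at h_bound
  · have h_initial : (1 - γ) * α s ≤ C * ((1 - γ) * α s) :=
      le_mul_of_one_le_left (mul_nonneg (sub_nonneg.2 hγ1.le) (hα s)) hC1
    linarith
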